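/- Let f : ℝⁿ × ℝ^d → ℝⁿ be C¹, and let Λ : ℝ → ℝ^d be C¹ and exponentially bi-asymptotically constant with decay coefficient ρ > 0, with limits λ^± at ±∞. Fix r > 0 and α with 0 < α < ρ. Then for every x₀ ∈ ℝⁿ, the Fréchet derivative of the compactified vector field F_{r,α} within ℝⁿ × [−1,1] at the point (x₀, 1) maps the vector (0, 1) ∈ ℝⁿ × ℝ to (0, −α), and at the point (x₀, −1) it maps (0, 1) to (0, α). In other words, (0,1) is an eigenvector normal to the invariant subspaces S^± = ℝⁿ × {±1}, with eigenvalue −α at s = 1 and eigenvalue +α at s = −1. -/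

import Mathlib

open Filter Topology

/-- The time compactification map `g_α(τ) = tanh(ατ/2)`. -/
noncomputable def gcomp (α τ : ℝ) : ℝ := Real.tanh (α * τ / 2)

/-- Its inverse `h_α(s) = (1/α)·ln((1+s)/(1-s))`. -/
noncomputable def hcomp (α s : ℝ) : ℝ := (1 / α) * Real.log ((1 + s) / (1 - s))

/-- `Λ : ℝ → ℝ^d` is exponentially bi-asymptotically constant with decay coefficient `ρ`:
both limits `lim_{τ→+∞} Λ'(τ)·e^{ρτ}` and `lim_{τ→-∞} Λ'(τ)·e^{-ρτ}` exist. -/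
def ExpBiAsympConst {d : ℕ} (Λ : ℝ → Fin d → ℝ) (ρ : ℝ) : Prop :=
  (∃ Lp : Fin d → ℝ, Tendsto (fun τ => Real.exp (ρ * τ) • deriv Λ τ) atTop (𝓝 Lp)) ∧
  (∃ Lm : Fin d → ℝ, Tendsto (fun τ => Real.exp (-ρ * τ) • deriv Λ τ) atBot (𝓝 Lm))

/-- The compactified input `Λ_α : [-1,1] → ℝ^d`, equal to `Λ ∘ h_α` on `(-1,1)` and to the
future/past limits `lp`, `lm` at `s = 1`, `s = -1` respectively. -/
noncomputable def compInput {d : ℕ} (Λ : ℝ → Fin d → ℝ) (lp lm : Fin d → ℝ)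
    (α s : ℝ) : Fin d → ℝ :=
  if s = 1 then lp else if s = -1 then lm else Λ (hcomp α s)

/-- The compactified vector field `F_{r,α}(x,s) = (f(x,Λ_α(s))/r, α(1-s²)/2)` on `ℝⁿ × [-1,1]`. -/
noncomputable def compField {n d : ℕ} (f : (Fin n → ℝ) × (Fin d → ℝ) → Fin n → ℝ)
    (Λ : ℝ → Fin d → ℝ) (lp lm : Fin d → ℝ) (r α : ℝ) :
    (Fin n → ℝ) × ℝ → (Fin n → ℝ) × ℝ :=
  fun p => (r⁻¹ • f (p.1, compInput Λ lp lm α p.2), α * (1 - p.2 ^ 2) / 2)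

/-- The extended phase space `ℝⁿ × [-1,1]`. -/
def compDomain (n : ℕ) : Set ((Fin n → ℝ) × ℝ) := Set.univ ×ˢ Set.Icc (-1) 1

/-!
Put `Γ = Λ ∘ h_α`. On `(-1, 1)` we have `Γ'(s) = h_α'(s) • Λ'(h_α s)`, where
`h_α'(s) = 2 / (α (1 - s²))` blows up at `s = 1` like a multiple of `1 / (1 - s)`, that is, of
`exp (α h_α(s))`. Hence `Γ'(s) → 0` as soon as `Λ'(τ) = o(exp (-α τ))`, which holds when `Λ'`
decays at a rate `ρ > α`, and by the mean value theorem the extended input has a vanishing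
one-sided derivative at `s = 1`. The end `s = -1` is the end `s = 1` of the reversed input
`τ ↦ Λ (-τ)`. Since the input does not contribute to first order, the derivative of the field along
`(0, 1)` at `s = ±1` is that of `α (1 - s²) / 2` alone.
-/

open Asymptotics Set

section TimeCompactification

variable {α s : ℝ}

theorem hcomp_neg (α s : ℝ) : hcomp α (-s) = -hcomp α s := by
  rw [hcomp, hcomp, ← mul_neg, ← Real.log_inv, inv_div, sub_neg_eq_add, ← sub_eq_add_neg]

theorem hasDerivAt_hcomp (α : ℝ) (hs : s ∈ Ioo (-1) 1) :
    HasDerivAt (hcomp α) (2 / (α * ((1 + s) * (1 - s)))) s := by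
  have h₁ : 1 + s ≠ 0 := by linarith [hs.1]
  have h₂ : 1 - s ≠ 0 := by linarith [hs.2]
  have hquot : HasDerivAt (fun t : ℝ => (1 + t) / (1 - t)) (2 / (1 - s) ^ 2) s :=
    (((hasDerivAt_id' s).const_add 1).fun_div ((hasDerivAt_id' s).const_sub 1) h₂).congr_deriv
      (by ring)
  refine ((hquot.log (div_ne_zero h₁ h₂)).const_mul (1 / α)).congr_deriv ?_
  field_simp

theorem exp_neg_mul_hcomp (hα : α ≠ 0) (hs : s ∈ Ioo (-1) 1) :
    Real.exp (-α * hcomp α s) = (1 - s) / (1 + s) := by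
  have hpos : 0 < (1 + s) / (1 - s) := div_pos (by linarith [hs.1]) (by linarith [hs.2])
  rw [hcomp, ← mul_assoc, neg_mul, mul_one_div_cancel hα, neg_one_mul, Real.exp_neg,
    Real.exp_log hpos, inv_div]

theorem tendsto_hcomp_nhdsLT_one (hα : 0 < α) : Tendsto (hcomp α) (𝓝[<] 1) atTop := by
  have hnum : Tendsto (fun s : ℝ => 1 + s) (𝓝[<] 1) (𝓝 (1 + 1)) :=
    (Continuous.tendsto (by fun_prop) 1).mono_left nhdsWithin_le_nhds
  have hden : Tendsto (fun s : ℝ => 1 - s) (𝓝[<] 1) (𝓝[>] 0) := by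
    refine tendsto_nhdsWithin_iff.2 ⟨?_, ?_⟩
    · exact (Continuous.tendsto' (by fun_prop) 1 0 (sub_self 1)).mono_left nhdsWithin_le_nhds
    · filter_upwards [self_mem_nhdsWithin] with s hs using sub_pos.2 (mem_Iio.1 hs)
  have hquot : Tendsto (fun s : ℝ => (1 + s) / (1 - s)) (𝓝[<] 1) atTop :=
    hnum.pos_mul_atTop (by norm_num) (tendsto_inv_nhdsGT_zero.comp hden)
  exact (Real.tendsto_log_atTop.comp hquot).const_mul_atTop (one_div_pos.2 hα)

end TimeCompactification

section Input

variable {G : Type*}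

/-- The compactified input `Λ_α` for an input `Λ` with values in any type; `compInput` is the case
`G = ℝ^d`. The limits `lp`, `lm` are data, and the values at `|s| > 1` are junk. -/
noncomputable def compactifiedInput (Λ : ℝ → G) (lp lm : G) (α s : ℝ) : G :=
  if s = 1 then lp else if s = -1 then lm else Λ (hcomp α s)

variable {Λ : ℝ → G} {lp lm : G} {α s : ℝ}

theorem compactifiedInput_one (Λ : ℝ → G) (lp lm : G) (α : ℝ) :
    compactifiedInput Λ lp lm α 1 = lp :=
  if_pos rfl

theorem compactifiedInput_neg_one (Λ : ℝ → G) (lp lm : G) (α : ℝ) :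
    compactifiedInput Λ lp lm α (-1) = lm := by
  norm_num [compactifiedInput]

theorem compactifiedInput_of_ne (hs₁ : s ≠ 1) (hs₂ : s ≠ -1) :
    compactifiedInput Λ lp lm α s = Λ (hcomp α s) := by
  rw [compactifiedInput, if_neg hs₁, if_neg hs₂]

theorem compactifiedInput_neg (Λ : ℝ → G) (lp lm : G) (α s : ℝ) :
    compactifiedInput Λ lp lm α (-s) = compactifiedInput (fun τ => Λ (-τ)) lm lp α s := by
  rcases eq_or_ne s 1 with rfl | hs₁
  · rw [compactifiedInput_neg_one, compactifiedInput_one]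
  rcases eq_or_ne s (-1) with rfl | hs₂
  · rw [neg_neg, compactifiedInput_one, compactifiedInput_neg_one]
  · rw [compactifiedInput_of_ne (by rwa [ne_eq, neg_eq_iff_eq_neg]) (neg_injective.ne hs₁),
      compactifiedInput_of_ne hs₁ hs₂, hcomp_neg]

theorem compactifiedInput_eventuallyEq_nhdsLT_one (Λ : ℝ → G) (lp lm : G) (α : ℝ) :
    compactifiedInput Λ lp lm α =ᶠ[𝓝[<] 1] Λ ∘ hcomp α := by
  filter_upwards [Ioo_mem_nhdsLT (show (-1 : ℝ) < 1 by norm_num)] with s hs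
  exact compactifiedInput_of_ne hs.2.ne hs.1.ne'

theorem continuousWithinAt_compactifiedInput_one [TopologicalSpace G] (hα : 0 < α)
    (hp : Tendsto Λ atTop (𝓝 lp)) :
    ContinuousWithinAt (compactifiedInput Λ lp lm α) (Iio 1) 1 := by
  rw [ContinuousWithinAt, compactifiedInput_one]
  exact (hp.comp (tendsto_hcomp_nhdsLT_one hα)).congr'
    (compactifiedInput_eventuallyEq_nhdsLT_one Λ lp lm α).symm

variable [NormedAddCommGroup G] [NormedSpace ℝ G]

theorem hasDerivAt_compactifiedInput (hΛ : Differentiable ℝ Λ) (hs : s ∈ Ioo (-1) 1) :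
    HasDerivAt (compactifiedInput Λ lp lm α)
      ((2 / (α * ((1 + s) * (1 - s)))) • deriv Λ (hcomp α s)) s := by
  refine ((hΛ _).hasDerivAt.scomp s (hasDerivAt_hcomp α hs)).congr_of_eventuallyEq ?_
  filter_upwards [isOpen_Ioo.mem_nhds hs] with t ht
  exact compactifiedInput_of_ne ht.2.ne ht.1.ne'

theorem tendsto_deriv_compactifiedInput_one (hα : 0 < α) (hΛ : Differentiable ℝ Λ)
    (hdecay : deriv Λ =o[atTop] fun τ => Real.exp (-α * τ)) :
    Tendsto (deriv (compactifiedInput Λ lp lm α)) (𝓝[<] 1) (𝓝 0) := by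
  have hmem : Ioo (-1 : ℝ) 1 ∈ 𝓝[<] 1 := Ioo_mem_nhdsLT (by norm_num)
  have hlittle : (fun s => (2 / (α * ((1 + s) * (1 - s)))) • deriv Λ (hcomp α s)) =o[𝓝[<] 1]
      fun s => 2 / (α * ((1 + s) * (1 - s))) * Real.exp (-α * hcomp α s) :=
    (isBigO_refl (fun s => 2 / (α * ((1 + s) * (1 - s)))) _).smul_isLittleO
      (hdecay.comp_tendsto (tendsto_hcomp_nhdsLT_one hα))
  have hbound : Tendsto (fun s => 2 / (α * ((1 + s) * (1 - s))) * Real.exp (-α * hcomp α s))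
      (𝓝[<] 1) (𝓝 (2 / (α * (1 + 1) ^ 2))) := by
    have hcont : ContinuousAt (fun s : ℝ => 2 / (α * (1 + s) ^ 2)) 1 :=
      ContinuousAt.div (by fun_prop) (by fun_prop) (by positivity)
    refine (hcont.tendsto.mono_left nhdsWithin_le_nhds).congr' ?_
    filter_upwards [hmem] with s hs
    have h₁ : 1 + s ≠ 0 := by linarith [hs.1]
    have h₂ : 1 - s ≠ 0 := by linarith [hs.2]
    rw [exp_neg_mul_hcomp hα.ne' hs]
    field_simp
  refine ((isLittleO_one_iff ℝ).1 (hlittle.trans_isBigO (hbound.isBigO_one ℝ))).congr' ?_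
  filter_upwards [hmem] with s hs using (hasDerivAt_compactifiedInput hΛ hs).deriv.symm

theorem hasDerivWithinAt_compactifiedInput_one (hα : 0 < α) (hΛ : Differentiable ℝ Λ)
    (hp : Tendsto Λ atTop (𝓝 lp)) (hdecay : deriv Λ =o[atTop] fun τ => Real.exp (-α * τ)) :
    HasDerivWithinAt (compactifiedInput Λ lp lm α) 0 (Iic 1) 1 :=
  hasDerivWithinAt_Iic_of_tendsto_deriv (s := Ioo (-1) 1)
    (fun _ hs => (hasDerivAt_compactifiedInput hΛ hs).differentiableAt.differentiableWithinAt)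
    ((continuousWithinAt_compactifiedInput_one hα hp).mono Ioo_subset_Iio_self)
    (Ioo_mem_nhdsLT (by norm_num)) (tendsto_deriv_compactifiedInput_one hα hΛ hdecay)

theorem hasDerivWithinAt_compactifiedInput_neg_one (hα : 0 < α) (hΛ : Differentiable ℝ Λ)
    (hm : Tendsto Λ atBot (𝓝 lm)) (hdecay : deriv Λ =o[atBot] fun τ => Real.exp (α * τ)) :
    HasDerivWithinAt (compactifiedInput Λ lp lm α) 0 (Ici (-1)) (-1) := by
  have hdecay' : deriv (fun τ => Λ (-τ)) =o[atTop] fun τ => Real.exp (-α * τ) :=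
    (hdecay.comp_tendsto tendsto_neg_atTop_atBot).neg_left.congr
      (fun τ => (deriv_comp_neg Λ τ).symm)
      (fun τ => by rw [Function.comp_apply, mul_neg, neg_mul])
  have hreversed : HasDerivWithinAt (compactifiedInput (fun τ => Λ (-τ)) lm lp α) 0 (Iic 1)
      (-(-1)) := by
    rw [neg_neg]
    exact hasDerivWithinAt_compactifiedInput_one hα (hΛ.comp differentiable_neg)
      (hm.comp tendsto_neg_atTop_atBot) hdecay'
  have hderiv := hreversed.scomp (-1) (hasDerivWithinAt_neg (-1) (Ici (-1)))
    fun _ hs => neg_le.2 hs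
  rw [smul_zero] at hderiv
  refine hderiv.congr_of_mem (fun s _ => ?_) self_mem_Ici
  rw [Function.comp_apply, ← compactifiedInput_neg, neg_neg]

end Input

section Decay

theorem isLittleO_exp_of_tendsto_exp_smul {ι G : Type*} [NormedAddCommGroup G] [NormedSpace ℝ G]
    {l : Filter ι} {u : ι → G} {a b : ι → ℝ} {c : G}
    (hu : Tendsto (fun i => Real.exp (b i) • u i) l (𝓝 c))
    (hab : Tendsto (fun i => a i + b i) l atTop) :
    u =o[l] fun i => Real.exp (a i) := by
  have hexp : (fun i => Real.exp (-b i)) =o[l] fun i => Real.exp (a i) :=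
    Real.isLittleO_exp_comp_exp_comp.2 (by simpa only [sub_neg_eq_add] using hab)
  refine (hexp.smul_isBigO (hu.isBigO_one ℝ)).congr (fun i => ?_) fun i => ?_
  · rw [smul_smul, ← Real.exp_add, neg_add_cancel, Real.exp_zero, one_smul]
  · rw [smul_eq_mul, mul_one]

variable {d : ℕ} {Λ : ℝ → Fin d → ℝ} {ρ α : ℝ}

theorem ExpBiAsympConst.deriv_isLittleO_atTop (h : ExpBiAsympConst Λ ρ) (hα : α < ρ) :
    deriv Λ =o[atTop] fun τ => Real.exp (-α * τ) := by
  obtain ⟨_, hlim⟩ := h.1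
  refine isLittleO_exp_of_tendsto_exp_smul hlim ?_
  simp only [← add_mul]
  exact tendsto_id.const_mul_atTop (by linarith)

theorem ExpBiAsympConst.deriv_isLittleO_atBot (h : ExpBiAsympConst Λ ρ) (hα : α < ρ) :
    deriv Λ =o[atBot] fun τ => Real.exp (α * τ) := by
  obtain ⟨_, hlim⟩ := h.2
  refine isLittleO_exp_of_tendsto_exp_smul hlim ?_
  simp only [← add_mul]
  exact tendsto_id.const_mul_atBot_of_neg (by linarith)

end Decay

section Field

variable {E G : Type*} [NormedAddCommGroup E] [NormedSpace ℝ E]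
  [NormedAddCommGroup G] [NormedSpace ℝ G]

/-- The compactified vector field `(x, s) ↦ (f (x, Γ s), α (1 - s²) / 2)` driven by an input `Γ` in
compactified time. The factor `1 / r` of `F_{r,α}` is absorbed into `f`. -/
noncomputable def compactifiedField (f : E × G → E) (Γ : ℝ → G) (α : ℝ) : E × ℝ → E × ℝ :=
  fun p => (f (p.1, Γ p.2), α * (1 - p.2 ^ 2) / 2)

variable {f : E × G → E} {α : ℝ}

theorem hasFDerivWithinAt_compactifiedField {f' : E × G →L[ℝ] E} {Γ : ℝ → G} {γ : G} {I : Set ℝ}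
    {x₀ : E} {s₀ : ℝ} (hf : HasFDerivAt f f' (x₀, Γ s₀)) (hΓ : HasDerivWithinAt Γ γ I s₀) :
    HasFDerivWithinAt (compactifiedField f Γ α)
      ((f' ∘L (ContinuousLinearMap.fst ℝ E ℝ).prod
          (.toSpanSingleton ℝ γ ∘L ContinuousLinearMap.snd ℝ E ℝ)).prod
        ((-α * s₀) • ContinuousLinearMap.snd ℝ E ℝ))
      (univ ×ˢ I) (x₀, s₀) := by
  have hinput : HasFDerivWithinAt (fun p : E × ℝ => Γ p.2)
      (.toSpanSingleton ℝ γ ∘L ContinuousLinearMap.snd ℝ E ℝ) (univ ×ˢ I) (x₀, s₀) :=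
    hΓ.hasFDerivWithinAt.comp (x₀, s₀) hasFDerivWithinAt_snd fun _ hp => hp.2
  have htime : HasDerivAt (fun s : ℝ => α * (1 - s ^ 2) / 2) (-α * s₀) s₀ :=
    ((((hasDerivAt_pow 2 s₀).const_sub 1).const_mul α).div_const 2).congr_deriv
      (by push_cast; ring)
  exact (hf.comp_hasFDerivWithinAt (x₀, s₀) (hasFDerivWithinAt_fst.prodMk hinput)).prodMk
    (htime.comp_hasFDerivWithinAt (f := Prod.snd) (x₀, s₀) hasFDerivWithinAt_snd)

theorem exists_hasFDerivWithinAt_compactifiedField {Γ : ℝ → G} {I : Set ℝ} {x₀ : E} {s₀ : ℝ}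
    (hf : DifferentiableAt ℝ f (x₀, Γ s₀)) (hΓ : HasDerivWithinAt Γ 0 I s₀) :
    ∃ L : E × ℝ →L[ℝ] E × ℝ,
      HasFDerivWithinAt (compactifiedField f Γ α) L (univ ×ˢ I) (x₀, s₀) ∧
        L (0, 1) = (0, -α * s₀) :=
  ⟨_, hasFDerivWithinAt_compactifiedField hf.hasFDerivAt hΓ, by simp [Prod.mk_zero_zero]⟩

theorem stmt6_general {Λ : ℝ → G} {lp lm : G} {x₀ : E} (hα : 0 < α)
    (hfp : DifferentiableAt ℝ f (x₀, lp)) (hfm : DifferentiableAt ℝ f (x₀, lm))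
    (hΛ : Differentiable ℝ Λ)
    (hp : Tendsto Λ atTop (𝓝 lp)) (hm : Tendsto Λ atBot (𝓝 lm))
    (hΛp : deriv Λ =o[atTop] fun τ => Real.exp (-α * τ))
    (hΛm : deriv Λ =o[atBot] fun τ => Real.exp (α * τ)) :
    (∃ L : E × ℝ →L[ℝ] E × ℝ,
      HasFDerivWithinAt (compactifiedField f (compactifiedInput Λ lp lm α) α) L
        (univ ×ˢ Icc (-1) 1) (x₀, 1) ∧ L (0, 1) = (0, -α)) ∧
    (∃ L : E × ℝ →L[ℝ] E × ℝ,
      HasFDerivWithinAt (compactifiedField f (compactifiedInput Λ lp lm α) α) L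
        (univ ×ˢ Icc (-1) 1) (x₀, -1) ∧ L (0, 1) = (0, α)) := by
  constructor
  · rw [← compactifiedInput_one Λ lp lm α] at hfp
    simpa only [mul_one] using exists_hasFDerivWithinAt_compactifiedField hfp
      ((hasDerivWithinAt_compactifiedInput_one hα hΛ hp hΛp).mono Icc_subset_Iic_self)
  · rw [← compactifiedInput_neg_one Λ lp lm α] at hfm
    simpa only [mul_neg, mul_one, neg_neg] using exists_hasFDerivWithinAt_compactifiedField hfm
      ((hasDerivWithinAt_compactifiedInput_neg_one hα hΛ hm hΛm).mono Icc_subset_Ici_self)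

end Field

/-- For `0 < α < ρ` and `r > 0`, the Fréchet derivative of the compactified
vector field within `ℝⁿ × [-1,1]` at `(x₀, 1)` maps `(0,1)` to `(0,-α)`, and at `(x₀, -1)` it
maps `(0,1)` to `(0,α)`: `(0,1)` is an eigenvector normal to `S^±` with eigenvalue `∓α`. -/
theorem stmt6 {n d : ℕ} (f : (Fin n → ℝ) × (Fin d → ℝ) → Fin n → ℝ)
    (hf : ContDiff ℝ 1 f)
    (Λ : ℝ → Fin d → ℝ) (ρ : ℝ) (hρ : 0 < ρ)
    (hΛ : ContDiff ℝ 1 Λ) (hbac : ExpBiAsympConst Λ ρ)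
    (lp lm : Fin d → ℝ)
    (hp : Tendsto Λ atTop (𝓝 lp)) (hm : Tendsto Λ atBot (𝓝 lm))
    (r α : ℝ) (hr : 0 < r) (hα1 : 0 < α) (hα2 : α < ρ) :
    ∀ x₀ : Fin n → ℝ,
      (∃ L : ((Fin n → ℝ) × ℝ) →L[ℝ] ((Fin n → ℝ) × ℝ),
        HasFDerivWithinAt (compField f Λ lp lm r α) L (compDomain n) (x₀, 1) ∧
        L ((0 : Fin n → ℝ), (1 : ℝ)) = ((0 : Fin n → ℝ), -α)) ∧
      (∃ L : ((Fin n → ℝ) × ℝ) →L[ℝ] ((Fin n → ℝ) × ℝ),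
        HasFDerivWithinAt (compField f Λ lp lm r α) L (compDomain n) (x₀, -1) ∧
        L ((0 : Fin n → ℝ), (1 : ℝ)) = ((0 : Fin n → ℝ), α)) :=
  fun _ => stmt6_general (f := r⁻¹ • f) hα1
    ((hf.differentiable one_ne_zero _).const_smul r⁻¹)
    ((hf.differentiable one_ne_zero _).const_smul r⁻¹)
    (hΛ.differentiable one_ne_zero) hp hm
    (hbac.deriv_isLittleO_atTop hα2) (hbac.deriv_isLittleO_atBot hα2)
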